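/- arXiv:1909.11744 — 2 statements merged into one kernel-verified Lean document; each statement's English description precedes it below -/
import Mathlib

section
/- Suppose w_1, ..., w_k ∈ ℕ satisfy |X_j| ≤ w_j ≤ (1 + ε/2)·|X_j| for every j. Let M be a multiset of η·k points sampled independently from X by D²-sampling with respect to B (with η = Θ(τ·α·k/ε²) and τ = Θ((k/ε²)·log(k/ε))), viewed as the union of k batches M_1', ..., M_k' of η points each; let B_j' be the multiset consisting of τ copies of each element of B, and set M_j = B_j' ∪ (M_j'|_{X_j}), where M_j'|_{X_j} is the sub-multiset of M_j' of points lying in X_j. Then with probability at least c·ε for a universal constant c > 0, there exist multisets S_1, ..., S_k with S_j ⊆ M_j and |S_j| = τ for all j such that Φ(best_𝓡(J, S_1, ..., S_k, w_1, ..., w_k), X) ≤ (1 + ε)·OPT. -/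
/-!
Fix `p = ε / (100 α k)`. In cluster `X_j` call a point `z` far if
`H(z, B) |X_j| > p Φ(B, X)`, and let `π_j` fix the far points and send every other point to a
nearest center of `B`. Replacing each `z ∈ X_j` by `π_j z` costs at most `p k Φ(B, X)`, hence at
most `(ε / 100) OPT`, in total. A far point has `D²`-mass at least `p / |X_j|`, so one
`D²`-sample can be coupled with a draw that succeeds with probability `p` and, when it succeeds,
yields a uniform point `z` of `X_j`, equal to the sample itself if `z` is far
(`exists_step_coupling`). As `p η ≥ 4 τ`, a batch produces `τ` independent uniform points of `X_j`
except with probability at most `1 / (2 k)` (`exists_batch_coupling`, `success_ge`). The image of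
these `τ` points under `π_j` is a sub-multiset of `M_j` (`sample_le_batch`): the far ones occur in
the batch, and the others go to `B`, of which `τ` copies are available. So all `k` batches succeed
with probability at least `1 / 2`, and it remains to see that `best_𝓡` does well with probability
at least `1 / 2` when each `S_j` is made of `τ` uniform points of `X_j`, moved by `π_j`.

In coordinate `i`, let `q_j` be the probability that such a point disagrees with the optimal center
`c_j`, and `q̂_j` the observed fraction. A pointwise quadratic inequality shows that
the minimizer of the empirical cost has true cost at most
`(1 + 8 t) ∑ w_j q_j + (8 + 2 / t) ∑ w_j (q̂_j - q_j)²` for every `0 < t ≤ 1 / 4`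
(`column_bound`), with no dependence on which tuples `R_i` allows. The variance of `q̂_j` is at most
`q_j / τ` (`empirical_variance_le`), so, summed over all coordinates, the quadratic term has
expectation `O(OPT / τ)` before the factor `8 + 2 / t`. With `t = ε / 200` and `τ ≥ 60000 / ε²`,
Markov's inequality (`markov_sum`) bounds the total by `(1 + ε) OPT` with probability at
least `1 / 2` (`final_arith`). Thus the success probability is at least `1 / 4 ≥ ε / 2`.
-/

open Finset
open scoped Classical

/-- Points of the binary hypercube `{0,1}^d`, viewed as `d`-bit strings. -/
abbrev Pt (d : ℕ) := Fin d → Bool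

/-- `Φ(c, X) = Σ_{x ∈ X} H(x, c)` for a single center `c` and a finite set `X`. -/
noncomputable def phi1 {d : ℕ} (c : Pt d) (X : Finset (Pt d)) : ℕ :=
  ∑ x ∈ X, hammingDist x c

/-- `Φ(c, X)` for a single center and a multiset `X`. -/
noncomputable def phi1M {d : ℕ} (c : Pt d) (X : Multiset (Pt d)) : ℕ :=
  (X.map fun x => hammingDist x c).sum

/-- `min_{b ∈ B} H(x, b)`. -/
noncomputable def minDist {d : ℕ} (B : Finset (Pt d)) (x : Pt d) : ℕ :=
  sInf ((fun b => hammingDist x b) '' (B : Set (Pt d)))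

/-- `Φ(B, X) = Σ_{x ∈ X} min_{b ∈ B} H(x, b)`. -/
noncomputable def phiSet {d : ℕ} (B X : Finset (Pt d)) : ℕ :=
  ∑ x ∈ X, minDist B x

/-- `Φ({c_1,...,c_k}, X)` for a tuple of centers and a finite set `X`. -/
noncomputable def phiTuple {d k : ℕ} (c : Fin k → Pt d) (X : Finset (Pt d)) : ℕ :=
  ∑ x ∈ X, sInf (Set.range fun j => hammingDist x (c j))

/-- `Φ({c_1,...,c_k}, X)` for a tuple of centers and a multiset `X`. -/
noncomputable def phiTupleM {d k : ℕ} (c : Fin k → Pt d) (X : Multiset (Pt d)) : ℕ :=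
  (X.map fun x => sInf (Set.range fun j => hammingDist x (c j))).sum

/-- The tuple of centers `(c_1,...,c_k)` satisfies the relations `𝓡 = (R_1,...,R_d)`:
for every coordinate `i`, `(c_1[i],...,c_k[i]) ∈ R_i`. -/
def Sat {d k : ℕ} (R : Fin d → Finset (Fin k → Bool)) (c : Fin k → Pt d) : Prop :=
  ∀ i, (fun j => c j i) ∈ R i

/-- `Xp 1, ..., Xp k` is a partition of `X` into `k` (possibly empty) clusters. -/
def IsPartition {d k : ℕ} (X : Finset (Pt d)) (Xp : Fin k → Finset (Pt d)) : Prop :=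
  (∀ j, Xp j ⊆ X) ∧ ∀ x ∈ X, ∃! j, x ∈ Xp j

/-- The coordinate-`i` cost `f_i(b_1,...,b_k) = Σ_{j : b_j = 1} w_j·|S_j^{(i,0)}|
  + Σ_{j : b_j = 0} w_j·|S_j^{(i,1)}|` (natural-number weights). -/
noncomputable def fCost {d k : ℕ} (S : Fin k → Multiset (Pt d)) (w : Fin k → ℕ)
    (i : Fin d) (b : Fin k → Bool) : ℕ :=
  ∑ j, w j * (((S j).filter fun s => s i ≠ b j).card)

/-- `bestSel` implements `best_𝓡`: for every input it outputs a tuple satisfying `𝓡` whose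
`i`-th column minimizes `f_i` over `R_i`, for every coordinate `i` (natural-number weights). -/
def BestSpec {d k : ℕ} (R : Fin d → Finset (Fin k → Bool))
    (bestSel : (Fin k → Multiset (Pt d)) → (Fin k → ℕ) → (Fin k → Pt d)) : Prop :=
  ∀ S w, Sat R (bestSel S w) ∧
    ∀ i, ∀ b ∈ R i, fCost S w i (fun j => bestSel S w j i) ≤ fCost S w i b

/-- The coordinate-`i` cost `f_i` (real weights). -/
noncomputable def fCostR {d k : ℕ} (S : Fin k → Multiset (Pt d)) (w : Fin k → ℝ)
    (i : Fin d) (b : Fin k → Bool) : ℝ :=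
  ∑ j, w j * ((((S j).filter fun s => s i ≠ b j).card : ℝ))

/-- `bestSel` implements `best_𝓡` (real weights). -/
def BestSpecR {d k : ℕ} (R : Fin d → Finset (Fin k → Bool))
    (bestSel : (Fin k → Multiset (Pt d)) → (Fin k → ℝ) → (Fin k → Pt d)) : Prop :=
  ∀ S w, Sat R (bestSel S w) ∧
    ∀ i, ∀ b ∈ R i, fCostR S w i (fun j => bestSel S w j i) ≤ fCostR S w i b

/-- The `D²`-sampling mass of a point `x` with respect to a center set `B`:
`(min_{b∈B} H(x,b)) / Φ(B,X)`. -/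
noncomputable def dmass {d : ℕ} (B X : Finset (Pt d)) (x : Pt d) : ℝ :=
  (minDist B x : ℝ) / (phiSet B X : ℝ)

/-! ### Coupling `D²`-samples with uniform samples -/

/-- A joint sub-distribution `J` of a draw `x` from `μ` and a label `z`, of total mass `p`, whose
label marginal is `p ν`. A label in `F` is always the drawn point itself. The other
labels are drawn proportionally to `ν`, using mass of `μ` that those labels leave over. -/
theorem exists_step_coupling {P : Type*} [Fintype P] (μ ν : P → ℝ) (F : P → Prop) (p : ℝ)
    (hμ0 : ∀ x, 0 ≤ μ x) (hμ1 : ∑ x, μ x = 1) (hν0 : ∀ x, 0 ≤ ν x) (hν1 : ∑ x, ν x = 1)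
    (hp0 : 0 ≤ p) (hp : p ≤ 1 / 2) (hF : ∀ z, F z → p * ν z ≤ μ z) :
    ∃ J : P → P → ℝ, (∀ x z, 0 ≤ J x z) ∧ (∀ x, ∑ z, J x z ≤ μ x) ∧
      (∀ z, ∑ x, J x z = p * ν z) ∧ ∀ x z, J x z ≠ 0 → F z → x = z := by
  set a : P → ℝ := fun x => if F x then p * ν x else 0 with ha
  set n : P → ℝ := fun x => if F x then 0 else p * ν x with hn
  have ha0 : ∀ x, 0 ≤ a x := fun x => by
    simp only [ha]; split_ifs <;> [exact mul_nonneg hp0 (hν0 x); exact le_rfl]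
  have hn0 : ∀ x, 0 ≤ n x := fun x => by
    simp only [hn]; split_ifs <;> [exact le_rfl; exact mul_nonneg hp0 (hν0 x)]
  have haμ : ∀ x, a x ≤ μ x := fun x => by
    simp only [ha]; split_ifs with h <;> [exact hF x h; exact hμ0 x]
  have han : ∑ x, a x + ∑ x, n x = p := by
    rw [← Finset.sum_add_distrib, ← mul_one p, ← hν1, Finset.mul_sum]
    refine Finset.sum_congr rfl fun x _ => ?_
    simp only [ha, hn]; split_ifs <;> simp
  have hnS : 0 ≤ ∑ x, n x := Finset.sum_nonneg fun x _ => hn0 x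
  set T : ℝ := 1 - ∑ x, a x with hT
  have hT0 : 0 < T := by linarith
  have hsub : ∑ x, (μ x - a x) = T := by rw [Finset.sum_sub_distrib, hμ1]
  refine ⟨fun x z => (if x = z then a z else 0) + n z * ((μ x - a x) / T), ?_, ?_, ?_, ?_⟩
  · intro x z
    have h1 : 0 ≤ (μ x - a x) / T := div_nonneg (by linarith [haμ x]) hT0.le
    have h2 := mul_nonneg (hn0 z) h1
    have h3 := ha0 z
    dsimp only
    split_ifs <;> linarith
  · intro x
    rw [Finset.sum_add_distrib, ← Finset.sum_mul, Finset.sum_ite_eq]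
    have h1 : 0 ≤ (μ x - a x) / T := div_nonneg (by linarith [haμ x]) hT0.le
    have h2 : (∑ z, n z) * ((μ x - a x) / T) ≤ T * ((μ x - a x) / T) :=
      mul_le_mul_of_nonneg_right (by linarith) h1
    rw [mul_div_cancel₀ _ hT0.ne'] at h2
    simp only [Finset.mem_univ, if_true]
    linarith
  · intro z
    rw [Finset.sum_add_distrib, ← Finset.mul_sum, ← Finset.sum_div, hsub, div_self hT0.ne',
      Finset.sum_ite_eq']
    simp only [Finset.mem_univ, if_true, ha, hn]
    split_ifs <;> simp
  · intro x z h hz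
    by_contra hne
    exact h (by simp [hne, hn, hz])

theorem sum_fin_cons {P : Type*} [Fintype P] {n : ℕ} (f : (Fin (n + 1) → P) → ℝ) :
    ∑ s, f s = ∑ x : P, ∑ s : Fin n → P, f (Fin.cons x s) := by
  rw [← Fintype.sum_prod_type' (f := fun x (s : Fin n → P) => f (Fin.cons x s))]
  exact (Fintype.sum_equiv (Fin.consEquiv fun _ => P) _ _ fun _ => rfl).symm

theorem map_fin_cons {P : Type*} {n : ℕ} (x : P) (s : Fin n → P) :
    Multiset.map (Fin.cons x s : Fin (n + 1) → P) Finset.univ.val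
      = x ::ₘ Multiset.map s Finset.univ.val := by
  rw [Fin.univ_succ]
  simp [Finset.map_val, Function.comp_def]

/-- A joint sub-distribution `J` of `η` independent draws `ω` from `μ` and `τ` labels `s`, built by
reading the draws one by one until `τ` of them have received a label. The labels are independent
with law `ν`, and the total mass `γ` is the probability that `η` trials of success probability `p`
contain `τ` successes; its complement is bounded through `E[2 ^ (τ - N)]`. -/
theorem exists_batch_coupling {P : Type*} [Fintype P] (μ ν : P → ℝ) (F : P → Prop) (p : ℝ)
    (hμ0 : ∀ x, 0 ≤ μ x) (hμ1 : ∑ x, μ x = 1) (hν0 : ∀ x, 0 ≤ ν x) (hν1 : ∑ x, ν x = 1)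
    (hp0 : 0 ≤ p) (hp : p ≤ 1 / 2) (hF : ∀ z, F z → p * ν z ≤ μ z) (η : ℕ) :
    ∀ τ : ℕ, ∃ (J : (Fin η → P) → (Fin τ → P) → ℝ) (γ : ℝ),
      (∀ ω s, 0 ≤ J ω s) ∧ (∀ ω, ∑ s, J ω s ≤ ∏ u, μ (ω u)) ∧
      (∀ s, ∑ ω, J ω s = γ * ∏ v, ν (s v)) ∧
      (∀ ω s, J ω s ≠ 0 → (Multiset.map s Finset.univ.val).filter F
        ≤ Multiset.map ω Finset.univ.val) ∧
      1 - γ ≤ (1 - p / 2) ^ η * 2 ^ τ := by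
  have zero_case : ∀ η : ℕ, ∃ (J : (Fin η → P) → (Fin 0 → P) → ℝ) (γ : ℝ),
      (∀ ω s, 0 ≤ J ω s) ∧ (∀ ω, ∑ s, J ω s ≤ ∏ u, μ (ω u)) ∧
      (∀ s, ∑ ω, J ω s = γ * ∏ v, ν (s v)) ∧
      (∀ ω s, J ω s ≠ 0 → (Multiset.map s Finset.univ.val).filter F
        ≤ Multiset.map ω Finset.univ.val) ∧
      1 - γ ≤ (1 - p / 2) ^ η * 2 ^ 0 := by
    intro η
    refine ⟨fun ω _ => ∏ u, μ (ω u), 1, fun ω s => Finset.prod_nonneg fun u _ => hμ0 _,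
      fun ω => by simp, fun s => ?_, fun ω s _ => by simp, ?_⟩
    · have := Fintype.prod_sum (fun (_ : Fin η) (x : P) => μ x)
      rw [← this]; simp [hμ1]
    · have : 0 ≤ (1 - p / 2) ^ η := pow_nonneg (by linarith) _
      simpa using this
  obtain ⟨j, hj0, hjμ, hjν, hjF⟩ := exists_step_coupling μ ν F p hμ0 hμ1 hν0 hν1 hp0 hp hF
  induction η with
  | zero =>
    rintro (_ | τ)
    · exact zero_case 0
    · refine ⟨fun _ _ => 0, 0, by simp, by simp, by simp, by simp, ?_⟩
      simpa using one_le_pow₀ (by norm_num : (1 : ℝ) ≤ 2)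
  | succ η ih =>
    rintro (_ | τ)
    · exact zero_case _
    obtain ⟨J₁, γ₁, h0₁, hm₁, hn₁, hr₁, hg₁⟩ := ih τ
    obtain ⟨J₂, γ₂, h0₂, hm₂, hn₂, hr₂, hg₂⟩ := ih (τ + 1)
    set r : P → ℝ := fun x => μ x - ∑ z, j x z with hr
    have hr0 : ∀ x, 0 ≤ r x := fun x => by simp only [hr]; linarith [hjμ x]
    have hrS : ∑ x, r x = 1 - p := by
      simp only [hr]
      rw [Finset.sum_sub_distrib, hμ1, Finset.sum_comm]
      simp_rw [hjν]
      rw [← Finset.mul_sum, hν1, mul_one]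
    refine ⟨fun ω s => j (ω 0) (s 0) * J₁ (Fin.tail ω) (Fin.tail s) + r (ω 0) * J₂ (Fin.tail ω) s,
      p * γ₁ + (1 - p) * γ₂, ?_, ?_, ?_, ?_, ?_⟩
    · intro ω s
      have := mul_nonneg (hj0 (ω 0) (s 0)) (h0₁ (Fin.tail ω) (Fin.tail s))
      have := mul_nonneg (hr0 (ω 0)) (h0₂ (Fin.tail ω) s)
      linarith
    · intro ω
      rw [Finset.sum_add_distrib, ← Finset.mul_sum, sum_fin_cons]
      simp only [Fin.cons_zero, Fin.tail_cons, ← Finset.mul_sum, ← Finset.sum_mul]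
      rw [Fin.prod_univ_succ]
      have e1 := mul_le_mul_of_nonneg_left (hm₁ (Fin.tail ω))
        (Finset.sum_nonneg fun z (_ : z ∈ Finset.univ) => hj0 (ω 0) z)
      have e2 := mul_le_mul_of_nonneg_left (hm₂ (Fin.tail ω)) (hr0 (ω 0))
      have e3 : μ (ω 0) = ∑ z, j (ω 0) z + r (ω 0) := by simp only [hr]; ring
      rw [e3, add_mul]
      exact add_le_add e1 e2
    · intro s
      rw [sum_fin_cons]
      simp only [Fin.cons_zero, Fin.tail_cons, Finset.sum_add_distrib, ← Finset.mul_sum]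
      rw [← Finset.sum_mul, ← Finset.sum_mul, hjν, hrS, hn₁, hn₂, Fin.prod_univ_succ]
      simp only [Fin.tail]
      ring
    · intro ω s h
      obtain ⟨x, ω, rfl⟩ : ∃ x ω', ω = Fin.cons x ω' := ⟨ω 0, Fin.tail ω, by simp⟩
      rw [map_fin_cons]
      simp only [Fin.cons_zero, Fin.tail_cons] at h
      by_cases h2 : J₂ ω s = 0
      · have h1 : j x (s 0) * J₁ ω (Fin.tail s) ≠ 0 := by simpa [h2] using h
        obtain ⟨z, s, rfl⟩ : ∃ z s', s = Fin.cons z s' := ⟨s 0, Fin.tail s, by simp⟩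
        simp only [Fin.cons_zero, Fin.tail_cons] at h1
        have hle := hr₁ ω s (right_ne_zero_of_mul h1)
        rw [map_fin_cons]
        by_cases hz : F z
        · rw [Multiset.filter_cons_of_pos _ hz, hjF x z (left_ne_zero_of_mul h1) hz]
          exact Multiset.cons_le_cons _ hle
        · rw [Multiset.filter_cons_of_neg _ hz]
          exact hle.trans (Multiset.le_cons_self _ _)
      · exact (hr₂ ω s h2).trans (Multiset.le_cons_self _ _)
    · have e1 := mul_le_mul_of_nonneg_left hg₁ hp0
      have e2 := mul_le_mul_of_nonneg_left hg₂ (by linarith : 0 ≤ 1 - p)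
      calc 1 - (p * γ₁ + (1 - p) * γ₂) = p * (1 - γ₁) + (1 - p) * (1 - γ₂) := by ring
        _ ≤ _ := add_le_add e1 e2
        _ = _ := by ring

/-! ### Variance of empirical frequencies -/

theorem sum_prod_eq_one {P : Type*} [Fintype P] (ν : P → ℝ) (hν1 : ∑ x, ν x = 1) (n : ℕ) :
    ∑ s : Fin n → P, ∏ v, ν (s v) = 1 := by
  rw [← Fintype.prod_sum (fun (_ : Fin n) (x : P) => ν x)]; simp [hν1]

theorem second_moment_centered {P : Type*} [Fintype P] (ν f : P → ℝ) (hν1 : ∑ x, ν x = 1)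
    (hf : ∑ x, ν x * f x = 0) (n : ℕ) :
    ∑ s : Fin n → P, (∏ v, ν (s v)) * ∑ v, f (s v) = 0 ∧
    ∑ s : Fin n → P, (∏ v, ν (s v)) * (∑ v, f (s v)) ^ 2 = n * ∑ x, ν x * f x ^ 2 := by
  induction n with
  | zero => simp
  | succ n ih =>
    obtain ⟨ih1, ih2⟩ := ih
    have h1 := sum_prod_eq_one ν hν1 n
    constructor
    · rw [sum_fin_cons]
      simp only [Fin.prod_univ_succ, Fin.sum_univ_succ, Fin.cons_zero, Fin.cons_succ]
      have : ∀ x, ∑ s : Fin n → P, ν x * (∏ v, ν (s v)) * (f x + ∑ v, f (s v)) = ν x * f x := by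
        intro x
        calc _ = ν x * f x * (∑ s : Fin n → P, ∏ v, ν (s v))
              + ν x * ∑ s : Fin n → P, (∏ v, ν (s v)) * ∑ v, f (s v) := by
              rw [Finset.mul_sum, Finset.mul_sum, ← Finset.sum_add_distrib]
              exact Finset.sum_congr rfl fun s _ => by ring
          _ = _ := by rw [h1, ih1]; ring
      rw [Finset.sum_congr rfl fun x _ => this x, hf]
    · rw [sum_fin_cons]
      simp only [Fin.prod_univ_succ, Fin.sum_univ_succ, Fin.cons_zero, Fin.cons_succ]
      have : ∀ x, ∑ s : Fin n → P, ν x * (∏ v, ν (s v)) * (f x + ∑ v, f (s v)) ^ 2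
          = ν x * f x ^ 2 + ν x * (n * ∑ x, ν x * f x ^ 2) := by
        intro x
        calc _ = ν x * f x ^ 2 * (∑ s : Fin n → P, ∏ v, ν (s v))
              + 2 * ν x * f x * (∑ s : Fin n → P, (∏ v, ν (s v)) * ∑ v, f (s v))
              + ν x * ∑ s : Fin n → P, (∏ v, ν (s v)) * (∑ v, f (s v)) ^ 2 := by
              rw [Finset.mul_sum, Finset.mul_sum, Finset.mul_sum, ← Finset.sum_add_distrib,
                ← Finset.sum_add_distrib]
              exact Finset.sum_congr rfl fun s _ => by ring
          _ = _ := by rw [h1, ih1, ih2]; ring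
      rw [Finset.sum_congr rfl fun x _ => this x, Finset.sum_add_distrib, ← Finset.sum_mul, hν1]
      push_cast; ring

theorem empirical_variance_le {P : Type*} [Fintype P] (ν f : P → ℝ)
    (hν1 : ∑ x, ν x = 1) (hf : ∀ x, f x = 0 ∨ f x = 1) (n : ℕ) (hn : 0 < n) :
    ∑ s : Fin n → P, (∏ v, ν (s v)) * ((∑ v, f (s v)) / n - ∑ x, ν x * f x) ^ 2
      ≤ (∑ x, ν x * f x) / n := by
  set q := ∑ x, ν x * f x with hq
  have hn' : (0 : ℝ) < n := by exact_mod_cast hn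
  have h := (second_moment_centered ν (fun x => f x - q) hν1
    (by simp only [mul_sub, Finset.sum_sub_distrib, ← Finset.sum_mul, hν1, ← hq]; ring) n).2
  have e : ∀ s : Fin n → P, ((∑ v, f (s v)) / n - q) ^ 2 = (∑ v, (f (s v) - q)) ^ 2 / n ^ 2 := by
    intro s
    simp only [Finset.sum_sub_distrib, Finset.sum_const, Finset.card_univ, Fintype.card_fin,
      nsmul_eq_mul]
    field_simp
  simp only [e, ← mul_div_assoc, ← Finset.sum_div]
  rw [h]
  have hv : ∑ x, ν x * (f x - q) ^ 2 ≤ q := by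
    have : ∑ x, ν x * (f x - q) ^ 2 = q - q ^ 2 := by
      have e2 : ∀ x, ν x * (f x - q) ^ 2 = (1 - 2 * q) * (ν x * f x) + q ^ 2 * ν x := by
        intro x; rcases hf x with h | h <;> rw [h] <;> ring
      simp only [e2, Finset.sum_add_distrib, ← Finset.mul_sum, hν1, ← hq]; ring
    rw [this]; nlinarith [sq_nonneg q]
  calc _ = (∑ x, ν x * (f x - q) ^ 2) / n := by field_simp
    _ ≤ _ := by gcongr

/-! ### Loss from minimizing an empirical cost -/

/-- One coordinate of the comparison between empirical and true costs: `D j` says that the chosen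
bit of center `j` differs from the reference bit, `q j` is the true error rate of the reference bit
and `qh j` the observed one. If the choice is no worse empirically than the reference, its true cost
exceeds that of the reference by at most an `8 t`-fraction of the latter plus a term
quadratic in the deviations. -/
theorem column_bound {ι : Type*} [Fintype ι] (w q qh : ι → ℝ) (D : ι → Prop) [DecidablePred D] (t : ℝ)
    (hw : ∀ j, 0 ≤ w j) (hq : ∀ j, 0 ≤ q j) (ht : 0 < t) (ht4 : t ≤ 1 / 4)
    (h : ∑ j, w j * (if D j then 1 - qh j else qh j) ≤ ∑ j, w j * qh j) :
    ∑ j, w j * (if D j then 1 - q j else q j)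
      ≤ (1 + 8 * t) * ∑ j, w j * q j + (8 + 2 / t) * ∑ j, w j * (qh j - q j) ^ 2 := by
  -- the empirical inequality enters with multiplier `1 + 4 t`; what is left for a flipped bit is
  -- a quadratic in `qh j - q j` of negative discriminant
  have key : ∀ j, w j * (if D j then 1 - q j else q j) ≤
      (1 + 4 * t) * (w j * (if D j then 1 - qh j else qh j) - w j * qh j)
        + ((1 + 8 * t) * (w j * q j) + (8 + 2 / t) * (w j * (qh j - q j) ^ 2)) := by
    intro j
    have hti : 0 < 2 / t := by positivity
    have hwj := hw j
    have hqj := hq j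
    split_ifs
    · have hs : 0 ≤ 4 * t - 8 * t * (qh j - q j) - 2 * (qh j - q j)
          + (8 + 2 / t) * (qh j - q j) ^ 2 := by
        generalize qh j - q j = a
        have : 4 * t - 8 * t * a - 2 * a + (8 + 2 / t) * a ^ 2
            = (4 * t ^ 2 - 8 * t ^ 2 * a - 2 * a * t + (8 * t + 2) * a ^ 2) / t := by
          field_simp
        rw [this]
        apply div_nonneg _ ht.le
        nlinarith [sq_nonneg (a - 2 * t), sq_nonneg (a - t), sq_nonneg a, mul_pos ht ht]
      nlinarith [mul_nonneg hwj hs]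
    · have : 0 ≤ 8 * t * (w j * q j) := by positivity
      have : 0 ≤ (8 + 2 / t) * (w j * (qh j - q j) ^ 2) := by positivity
      linarith
  refine (Finset.sum_le_sum fun j _ => key j).trans ?_
  rw [Finset.sum_add_distrib, Finset.sum_add_distrib, ← Finset.mul_sum, ← Finset.mul_sum,
    ← Finset.mul_sum, Finset.sum_sub_distrib]
  nlinarith [mul_nonneg (by linarith : 0 ≤ 1 + 4 * t) (sub_nonneg.2 h)]

/-! ### Product distributions -/

theorem sum_prod_mul_coord {ι A : Type*} [Fintype ι] [DecidableEq ι] [Fintype A] (N : ι → A → ℝ)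
    (hN : ∀ j, ∑ a, N j a = 1) (h : A → ℝ) (j₀ : ι) :
    ∑ s : ι → A, (∏ j, N j (s j)) * h (s j₀) = ∑ a, N j₀ a * h a := by
  have key := Fintype.prod_sum (fun (j : ι) (a : A) => N j a * if j = j₀ then h a else 1)
  have e1 : ∀ s : ι → A, ∏ j, (N j (s j) * if j = j₀ then h (s j) else 1)
      = (∏ j, N j (s j)) * h (s j₀) := by
    intro s
    rw [Finset.prod_mul_distrib, Finset.prod_ite_eq' Finset.univ j₀ (fun j => h (s j))]
    simp
  rw [← Finset.sum_congr rfl fun s _ => e1 s, ← key, Finset.prod_eq_single j₀]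
  · simp
  · intro j _ hj; simp [hj, hN]
  · simp

/-- If independent couplings `J j`, of masses `γ j`, turn the event `G'` for `N` into the event `G`
for `m`, then `P(G) ≥ (∏ γ j) P(G')`. -/
theorem sum_prod_ge_of_coupling {ι A C : Type*} [Fintype ι] [DecidableEq ι] [Fintype A] [Fintype C]
    (m : A → ℝ) (N : ι → C → ℝ) (γ : ι → ℝ) (J : ι → A → C → ℝ)
    (hJ0 : ∀ j a c, 0 ≤ J j a c) (hJm : ∀ j a, ∑ c, J j a c ≤ m a)
    (hJN : ∀ j c, ∑ a, J j a c = γ j * N j c)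
    (G : (ι → A) → Prop) (G' : (ι → C) → Prop)
    (hG : ∀ ω s, (∀ j, J j (ω j) (s j) ≠ 0) → G' s → G ω) :
    (∏ j, γ j) * ∑ s ∈ Finset.univ.filter G', ∏ j, N j (s j)
      ≤ ∑ ω ∈ Finset.univ.filter G, ∏ j, m (ω j) := by
  have hm : ∀ a (_ : ι), 0 ≤ m a := fun a j =>
    (Finset.sum_nonneg fun c _ => hJ0 j a c).trans (hJm j a)
  calc (∏ j, γ j) * ∑ s ∈ Finset.univ.filter G', ∏ j, N j (s j)
      = ∑ s ∈ Finset.univ.filter G', ∑ ω : ι → A, ∏ j, J j (ω j) (s j) := by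
        rw [Finset.mul_sum]
        refine Finset.sum_congr rfl fun s _ => ?_
        rw [← Fintype.prod_sum (fun (j : ι) (a : A) => J j a (s j)), ← Finset.prod_mul_distrib]
        exact Finset.prod_congr rfl fun j _ => (hJN j (s j)).symm
    _ = ∑ ω : ι → A, ∑ s ∈ Finset.univ.filter G', ∏ j, J j (ω j) (s j) := Finset.sum_comm
    _ ≤ ∑ ω : ι → A, if G ω then ∏ j, m (ω j) else 0 := by
        refine Finset.sum_le_sum fun ω _ => ?_
        split_ifs with hω
        · calc _ ≤ ∑ s : ι → C, ∏ j, J j (ω j) (s j) :=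
                Finset.sum_le_sum_of_subset_of_nonneg (Finset.filter_subset _ _)
                  fun s _ _ => Finset.prod_nonneg fun j _ => hJ0 _ _ _
            _ = ∏ j, ∑ c, J j (ω j) c :=
                (Fintype.prod_sum (fun (j : ι) (c : C) => J j (ω j) c)).symm
            _ ≤ _ := Finset.prod_le_prod (fun j _ => Finset.sum_nonneg fun c _ => hJ0 _ _ _)
                fun j _ => hJm _ _
        · refine le_of_eq (Finset.sum_eq_zero fun s hs => ?_)
          by_contra hne
          exact hω (hG ω s (fun j => Finset.prod_ne_zero_iff.1 hne j (Finset.mem_univ j))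
            (Finset.mem_filter.1 hs).2)
    _ = _ := (Finset.sum_filter _ _).symm

theorem markov_sum {A : Type*} [Fintype A] (m Z : A → ℝ) (hm0 : ∀ a, 0 ≤ m a)
    (hm1 : ∑ a, m a = 1) (hZ : ∀ a, 0 ≤ Z a) (T : ℝ) (hT : 0 < T)
    (hE : ∑ a, m a * Z a ≤ T / 2) : 1 / 2 ≤ ∑ a ∈ Finset.univ.filter (fun a => Z a ≤ T), m a := by
  have h1 : ∑ a ∈ Finset.univ.filter (fun a => ¬ Z a ≤ T), m a * T ≤ ∑ a, m a * Z a :=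
    (Finset.sum_le_sum fun a ha => mul_le_mul_of_nonneg_left
      (not_le.1 (Finset.mem_filter.1 ha).2).le (hm0 a)).trans
      (Finset.sum_le_sum_of_subset_of_nonneg (Finset.filter_subset _ _)
        fun a _ _ => mul_nonneg (hm0 a) (hZ a))
  rw [← Finset.sum_mul] at h1
  have h2 := Finset.sum_filter_add_sum_filter_not Finset.univ (fun a => Z a ≤ T) m
  rw [hm1] at h2
  nlinarith

/-! ### Costs of the tuple chosen from moved samples -/

theorem sum_partition {d k : ℕ} {M : Type*} [AddCommMonoid M] (X : Finset (Pt d))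
    (Xp : Fin k → Finset (Pt d)) (h : IsPartition X Xp) (f : Pt d → M) :
    ∑ x ∈ X, f x = ∑ j, ∑ x ∈ Xp j, f x := by
  have hX : X = Finset.univ.biUnion Xp := by
    ext x
    simp only [Finset.mem_biUnion, Finset.mem_univ, true_and]
    exact ⟨fun hx => (h.2 x hx).exists, fun ⟨j, hj⟩ => h.1 j hj⟩
  rw [hX, Finset.sum_biUnion]
  intro i _ j _ hij
  refine Finset.disjoint_left.2 fun x hi hj => hij ?_
  exact (h.2 x (h.1 i hi)).unique hi hj

/-- Probability, for `z` distributed with weights `ν`, that `π z` and `c` differ in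
coordinate `i`. -/
noncomputable def errRate {d : ℕ} (ν : Pt d → ℝ) (π : Pt d → Pt d) (c : Pt d) (i : Fin d) : ℝ :=
  ∑ z, ν z * (if π z i ≠ c i then 1 else 0)

/-- Fraction of the points `π (s 0), ..., π (s (τ - 1))` that differ from `c` in
coordinate `i`. -/
noncomputable def empRate {d τ : ℕ} (s : Fin τ → Pt d) (π : Pt d → Pt d) (c : Pt d)
    (i : Fin d) : ℝ :=
  (∑ v, if π (s v) i ≠ c i then (1 : ℝ) else 0) / τ

theorem hammingDist_eq_sum {d : ℕ} (x y : Pt d) :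
    (hammingDist x y : ℝ) = ∑ i, if x i ≠ y i then (1 : ℝ) else 0 := by
  rw [Finset.sum_boole]; rfl

theorem ite_bool_flip (a b c : Bool) : (if a ≠ b then (1 : ℝ) else 0)
    = if b ≠ c then 1 - (if a ≠ c then (1 : ℝ) else 0) else if a ≠ c then (1 : ℝ) else 0 := by
  cases a <;> cases b <;> cases c <;> simp

theorem errRate_flip {d : ℕ} (ν : Pt d → ℝ) (hν1 : ∑ z, ν z = 1) (π : Pt d → Pt d) (b c : Pt d)
    (i : Fin d) :
    errRate ν π b i = if b i ≠ c i then 1 - errRate ν π c i else errRate ν π c i := by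
  unfold errRate
  split_ifs with h
  · rw [eq_sub_iff_add_eq, ← Finset.sum_add_distrib]
    refine Eq.trans ?_ hν1
    refine Finset.sum_congr rfl fun z _ => ?_
    rw [ite_bool_flip _ _ (c i), if_pos h]; ring
  · push Not at h
    rw [h]

theorem sum_errRate {d : ℕ} (ν : Pt d → ℝ) (π : Pt d → Pt d) (c : Pt d) :
    ∑ i, errRate ν π c i = ∑ z, ν z * hammingDist (π z) c := by
  unfold errRate
  rw [Finset.sum_comm]
  refine Finset.sum_congr rfl fun z _ => ?_
  rw [hammingDist_eq_sum, Finset.mul_sum]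

theorem empRate_flip {d τ : ℕ} (hτ : 0 < τ) (s : Fin τ → Pt d) (π : Pt d → Pt d) (b c : Pt d)
    (i : Fin d) :
    empRate s π b i = if b i ≠ c i then 1 - empRate s π c i else empRate s π c i := by
  have hτ' : (τ : ℝ) ≠ 0 := by positivity
  unfold empRate
  split_ifs with h
  · rw [eq_sub_iff_add_eq, ← add_div, ← Finset.sum_add_distrib, div_eq_one_iff_eq hτ']
    rw [Finset.sum_congr rfl (g := fun _ => (1 : ℝ))]
    · simp
    · intro v _
      rw [ite_bool_flip _ _ (c i), if_pos h]; ring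
  · push Not at h
    rw [h]

theorem fCost_eq {d k τ : ℕ} (hτ : 0 < τ) (s : Fin k → Fin τ → Pt d) (π : Fin k → Pt d → Pt d)
    (w : Fin k → ℕ) (i : Fin d) (b : Fin k → Pt d) :
    (fCost (fun j => Multiset.map (fun v => π j (s j v)) Finset.univ.val) w i (fun j => b j i) : ℝ)
      = τ * ∑ j, w j * empRate (s j) (π j) (b j) i := by
  have hτ' : (τ : ℝ) ≠ 0 := by positivity
  unfold fCost empRate
  push_cast
  rw [Finset.mul_sum]
  refine Finset.sum_congr rfl fun j _ => ?_
  have : ((Multiset.filter (fun s => s i ≠ b j i)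
      (Multiset.map (fun v => π j (s j v)) Finset.univ.val)).card : ℝ)
      = ∑ v, if π j (s j v) i ≠ b j i then (1 : ℝ) else 0 := by
    rw [Finset.sum_boole, Multiset.filter_map, Multiset.card_map]
    rfl
  rw [this]
  field_simp

/-- The cost of the tuple chosen from the moved samples `π j (s j v)` is at most the cost of moving
the clusters by `π`, plus the coordinatewise bound of `column_bound` for the moved clusters. -/
theorem phiTuple_best_le {d k τ : ℕ} (hτ : 0 < τ) (X : Finset (Pt d))
    (R : Fin d → Finset (Fin k → Bool)) (copt : Fin k → Pt d) (hsat : Sat R copt)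
    (Xp : Fin k → Finset (Pt d)) (hpart : IsPartition X Xp) (w : Fin k → ℕ)
    (ν : Fin k → Pt d → ℝ) (π : Fin k → Pt d → Pt d) (hν0 : ∀ j z, 0 ≤ ν j z)
    (hν1 : ∀ j, ∑ z, ν j z = 1)
    (hlow : ∀ j (f : Pt d → ℝ), (∀ z, 0 ≤ f z) → ∑ x ∈ Xp j, f x ≤ w j * ∑ z, ν j z * f z)
    (bestSel : (Fin k → Multiset (Pt d)) → (Fin k → ℕ) → (Fin k → Pt d))
    (hbest : BestSpec R bestSel) (t : ℝ) (ht : 0 < t) (ht4 : t ≤ 1 / 4)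
    (s : Fin k → Fin τ → Pt d) :
    (phiTuple (bestSel (fun j => Multiset.map (fun v => π j (s j v)) Finset.univ.val) w) X : ℝ)
      ≤ ∑ j, ∑ x ∈ Xp j, (hammingDist x (π j x) : ℝ)
        + ((1 + 8 * t) * ∑ i, ∑ j, w j * errRate (ν j) (π j) (copt j) i
        + (8 + 2 / t) * ∑ i, ∑ j, w j *
          (empRate (s j) (π j) (copt j) i - errRate (ν j) (π j) (copt j) i) ^ 2) := by
  have hτ' : (0 : ℝ) < τ := by exact_mod_cast hτ
  set S := fun j => Multiset.map (fun v => π j (s j v)) Finset.univ.val with hS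
  obtain ⟨-, hmin⟩ := hbest S w
  set ĉ := bestSel S w with hĉ
  have hcol : ∀ i, ∑ j, w j * errRate (ν j) (π j) (ĉ j) i
      ≤ (1 + 8 * t) * ∑ j, w j * errRate (ν j) (π j) (copt j) i
        + (8 + 2 / t) * ∑ j, w j *
          (empRate (s j) (π j) (copt j) i - errRate (ν j) (π j) (copt j) i) ^ 2 := by
    intro i
    simp only [fun j => errRate_flip (ν j) (hν1 j) (π j) (ĉ j) (copt j) i]
    have hq : ∀ j, 0 ≤ errRate (ν j) (π j) (copt j) i := fun j =>
      Finset.sum_nonneg fun z _ => mul_nonneg (hν0 j z) (by split_ifs <;> norm_num)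
    refine column_bound (fun j => (w j : ℝ)) (fun j => errRate (ν j) (π j) (copt j) i)
      (fun j => empRate (s j) (π j) (copt j) i) (fun j => ĉ j i ≠ copt j i) t
      (fun j => by positivity) hq ht ht4 ?_
    have h1 : (fCost S w i (fun j => ĉ j i) : ℝ) ≤ fCost S w i (fun j => copt j i) := by
      exact_mod_cast hmin i _ (hsat i)
    rw [hS, fCost_eq hτ, fCost_eq hτ] at h1
    have h2 := le_of_mul_le_mul_left h1 hτ'
    simp only [fun j => empRate_flip hτ (s j) (π j) (ĉ j) (copt j) i] at h2
    exact h2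
  have hsum := Finset.sum_le_sum fun i (_ : i ∈ Finset.univ) => hcol i
  rw [Finset.sum_add_distrib, ← Finset.mul_sum, ← Finset.mul_sum] at hsum
  refine le_trans ?_ (add_le_add_right hsum _)
  rw [Finset.sum_comm (s := (Finset.univ : Finset (Fin d))), ← Finset.sum_add_distrib]
  unfold phiTuple
  rw [sum_partition X Xp hpart]
  push_cast
  refine Finset.sum_le_sum fun j _ => ?_
  calc ∑ x ∈ Xp j, ((sInf (Set.range fun j => hammingDist x (ĉ j)) : ℕ) : ℝ)
      ≤ ∑ x ∈ Xp j, ((hammingDist x (π j x) : ℝ) + hammingDist (π j x) (ĉ j)) := by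
        refine Finset.sum_le_sum fun x _ => ?_
        have : sInf (Set.range fun j => hammingDist x (ĉ j))
            ≤ hammingDist x (π j x) + hammingDist (π j x) (ĉ j) :=
          (Nat.sInf_le (Set.mem_range_self j)).trans (hammingDist_triangle _ _ _)
        exact_mod_cast this
    _ ≤ _ := by
        rw [Finset.sum_add_distrib]
        refine add_le_add_right ?_ _
        refine (hlow j (fun x => hammingDist (π j x) (ĉ j)) fun z => by positivity).trans
          (le_of_eq ?_)
        rw [← Finset.mul_sum, sum_errRate]

/-- The weighted squared deviations of the empirical error rates have expectation at most `1 / τ`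
times the weighted sum of the error rates. -/
theorem expected_deviation_le {d k τ : ℕ} (hτ : 0 < τ) (w : Fin k → ℕ) (ν : Fin k → Pt d → ℝ)
    (π : Fin k → Pt d → Pt d) (hν1 : ∀ j, ∑ z, ν j z = 1) (c : Fin k → Pt d) :
    ∑ s : Fin k → Fin τ → Pt d, (∏ j, ∏ v, ν j (s j v)) *
        ∑ i, ∑ j, w j * (empRate (s j) (π j) (c j) i - errRate (ν j) (π j) (c j) i) ^ 2
      ≤ (∑ i, ∑ j, w j * errRate (ν j) (π j) (c j) i) / τ := by
  simp only [Finset.mul_sum, Finset.sum_div]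
  rw [Finset.sum_comm]
  refine Finset.sum_le_sum fun i _ => ?_
  rw [Finset.sum_comm]
  refine Finset.sum_le_sum fun j _ => ?_
  have h := sum_prod_mul_coord (fun j (a : Fin τ → Pt d) => ∏ v, ν j (a v))
    (fun j => sum_prod_eq_one (ν j) (hν1 j) τ)
    (fun a => w j * (empRate a (π j) (c j) i - errRate (ν j) (π j) (c j) i) ^ 2) j
  refine h.trans_le ?_
  have h2 := empirical_variance_le (ν j) (fun z => if π j z i ≠ c j i then 1 else 0) (hν1 j)
    (fun z => by split_ifs <;> simp) τ hτ
  calc _ = w j * ∑ a : Fin τ → Pt d, (∏ v, ν j (a v)) *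
        (empRate a (π j) (c j) i - errRate (ν j) (π j) (c j) i) ^ 2 := by
        rw [Finset.mul_sum]; exact Finset.sum_congr rfl fun a _ => by ring
    _ ≤ w j * (errRate (ν j) (π j) (c j) i / τ) := mul_le_mul_of_nonneg_left h2 (by positivity)
    _ = _ := by ring

/-- Sampled points satisfying `F` occur in the batch `M` and in the cluster `Y`; the other points are
sent into `B`, and `τ` copies of each element of `B` suffice for `τ` samples. -/
theorem sample_le_batch {d τ : ℕ} (B Y : Finset (Pt d)) (F : Pt d → Prop) (π : Pt d → Pt d)
    (hfar : ∀ z, F z → π z = z ∧ z ∈ Y) (hnear : ∀ z, ¬ F z → π z ∈ B) (s : Fin τ → Pt d)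
    (M : Multiset (Pt d)) (hM : (Multiset.map s Finset.univ.val).filter F ≤ M) :
    Multiset.map (fun v => π (s v)) Finset.univ.val
      ≤ (B.val.bind fun b => Multiset.replicate τ b) + M.filter (· ∈ Y) := by
  have h0 : Multiset.map (fun v => π (s v)) Finset.univ.val
      = Multiset.map π (Multiset.map s Finset.univ.val) := by
    rw [Multiset.map_map]; rfl
  have hcard : Multiset.card (Multiset.map s Finset.univ.val) = τ := by simp
  rw [h0]
  generalize Multiset.map s Finset.univ.val = N at hM hcard
  rw [← Multiset.filter_add_not F N, Multiset.map_add, add_comm]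
  refine add_le_add ?_ ?_
  · rw [Multiset.le_iff_count]
    intro b
    by_cases hb : b ∈ B
    · calc _ ≤ Multiset.card (Multiset.map π (N.filter fun a => ¬ F a)) := Multiset.count_le_card _ _
        _ ≤ τ := by
          rw [Multiset.card_map, ← hcard]; exact Multiset.card_le_card (Multiset.filter_le _ _)
        _ = Multiset.count b (Multiset.replicate τ b) := by simp
        _ ≤ _ := Multiset.count_le_of_le _ (Multiset.le_bind B.val hb)
    · rw [Multiset.count_eq_zero_of_notMem]
      · exact Nat.zero_le _
      · intro h
        obtain ⟨z, hz, rfl⟩ := Multiset.mem_map.1 h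
        exact hb (hnear z (Multiset.mem_filter.1 hz).2)
  · have : Multiset.map π (N.filter F) = N.filter F := by
      conv_rhs => rw [← Multiset.map_id (N.filter F)]
      exact Multiset.map_congr rfl fun z hz => (hfar z (Multiset.mem_filter.1 hz).2).1
    rw [this, Multiset.le_filter]
    exact ⟨hM, fun z hz => (hfar z (Multiset.mem_filter.1 hz).2).2⟩

/-! ### Numerical estimates -/

theorem success_ge {p γ : ℝ} {k τ η : ℕ} (hk : 0 < k) (hp : p ≤ 1 / 2)
    (hη : 4 * (τ : ℝ) ≤ p * η) (hτ : 2 * (k : ℝ) ≤ τ)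
    (h : 1 - γ ≤ (1 - p / 2) ^ η * 2 ^ τ) : 1 - 1 / (2 * (k : ℝ)) ≤ γ := by
  have hk' : (0 : ℝ) < k := by exact_mod_cast hk
  have h1 : (1 - p / 2) ^ η ≤ Real.exp (-(2 * τ)) := by
    calc (1 - p / 2) ^ η ≤ Real.exp (-(p / 2)) ^ η :=
          pow_le_pow_left₀ (by linarith) (Real.one_sub_le_exp_neg _) _
      _ = Real.exp (η * -(p / 2)) := (Real.exp_nat_mul _ _).symm
      _ ≤ _ := Real.exp_le_exp.2 (by linarith)
  have h2 : (2 : ℝ) ^ τ ≤ Real.exp τ := by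
    calc (2 : ℝ) ^ τ ≤ Real.exp 1 ^ τ :=
          pow_le_pow_left₀ (by norm_num) (by linarith [Real.add_one_le_exp (1 : ℝ)]) _
      _ = _ := by rw [← Real.exp_nat_mul, mul_one]
  have h3 : 1 - γ ≤ Real.exp (-τ) := by
    calc _ ≤ _ := h
      _ ≤ Real.exp (-(2 * τ)) * Real.exp τ := mul_le_mul h1 h2 (by positivity) (by positivity)
      _ = _ := by rw [← Real.exp_add]; congr 1; ring
  have h4 : Real.exp (-τ) ≤ 1 / (2 * (k : ℝ)) := by
    rw [Real.exp_neg, ← one_div]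
    exact one_div_le_one_div_of_le (by positivity) (by linarith [Real.add_one_le_exp (τ : ℝ)])
  linarith

theorem prod_success_ge {k : ℕ} (hk : 0 < k) (γ : Fin k → ℝ)
    (h : ∀ j, 1 - 1 / (2 * (k : ℝ)) ≤ γ j) : 1 / 2 ≤ ∏ j, γ j := by
  have hk' : (1 : ℝ) ≤ k := by exact_mod_cast hk
  have h0 : 1 / (2 * (k : ℝ)) ≤ 1 / 2 := one_div_le_one_div_of_le (by norm_num) (by linarith)
  calc (1 / 2 : ℝ) = 1 + k * -(1 / (2 * (k : ℝ))) := by field_simp; norm_num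
    _ ≤ (1 + -(1 / (2 * (k : ℝ)))) ^ k := one_add_mul_le_pow (by linarith) k
    _ = ∏ _j : Fin k, (1 - 1 / (2 * (k : ℝ))) := by simp [sub_eq_add_neg]
    _ ≤ _ := Finset.prod_le_prod (fun j _ => by linarith) fun j _ => h j

theorem final_arith {ε O mov g E τ : ℝ} (hε : 0 < ε) (hε2 : ε ≤ 1 / 2) (hO : 0 < O)
    (hmov : mov ≤ ε / 100 * O) (hg : g ≤ (1 + ε / 2) * (mov + O)) (hτ : 60000 / ε ^ 2 ≤ τ)
    (hE : E ≤ 3 * O / τ) :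
    mov + ((1 + 8 * (ε / 200)) * g + (8 + 2 / (ε / 200)) * E) ≤ (1 + ε) * O := by
  have hg' : g ≤ (1 + ε / 2) * (1 + ε / 100) * O :=
    hg.trans (by nlinarith)
  have hE' : E ≤ ε ^ 2 / 20000 * O := by
    calc E ≤ 3 * O / τ := hE
      _ ≤ 3 * O / (60000 / ε ^ 2) := by gcongr
      _ = _ := by field_simp; norm_num
  have h1 : (8 + 2 / (ε / 200)) * E ≤ (8 + 2 / (ε / 200)) * (ε ^ 2 / 20000 * O) :=
    mul_le_mul_of_nonneg_left hE' (by positivity)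
  have h2 : (8 + 2 / (ε / 200)) * (ε ^ 2 / 20000 * O) = (8 * ε ^ 2 + 400 * ε) / 20000 * O := by
    field_simp
    ring
  have h3 : (1 + 8 * (ε / 200)) * g ≤ (1 + 8 * (ε / 200)) * ((1 + ε / 2) * (1 + ε / 100) * O) :=
    mul_le_mul_of_nonneg_left hg' (by positivity)
  have h4 : 0 ≤ (1 + ε - (ε / 100 + (1 + 8 * (ε / 200)) * ((1 + ε / 2) * (1 + ε / 100))
      + (8 * ε ^ 2 + 400 * ε) / 20000)) := by
    nlinarith [mul_pos hε hε, mul_nonneg hε.le (sub_nonneg.2 hε2),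
      mul_nonneg (mul_pos hε hε).le (sub_nonneg.2 hε2)]
  nlinarith [mul_nonneg h4 hO.le]

/-! ### Uniform and `D²` weights -/

/-- The uniform distribution on `Y`; for empty `Y`, the point mass at the all-zeros string. -/
noncomputable def unifWeight {d : ℕ} (Y : Finset (Pt d)) (z : Pt d) : ℝ :=
  if Y.Nonempty then (if z ∈ Y then 1 / (Y.card : ℝ) else 0)
  else if z = (fun _ => false) then 1 else 0

theorem unifWeight_nonneg {d : ℕ} (Y : Finset (Pt d)) (z : Pt d) : 0 ≤ unifWeight Y z := by
  unfold unifWeight; split_ifs <;> positivity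

theorem sum_unifWeight_mul {d : ℕ} (Y : Finset (Pt d)) (hY : Y.Nonempty) (f : Pt d → ℝ) :
    ∑ z, unifWeight Y z * f z = (∑ x ∈ Y, f x) / Y.card := by
  simp only [unifWeight, if_pos hY, ite_mul, zero_mul]
  rw [← Finset.sum_filter, Finset.sum_div]
  refine Finset.sum_congr (by ext; simp) fun z _ => by ring

theorem sum_unifWeight {d : ℕ} (Y : Finset (Pt d)) : ∑ z, unifWeight Y z = 1 := by
  by_cases hY : Y.Nonempty
  · have h := sum_unifWeight_mul Y hY fun _ => 1
    have : (Y.card : ℝ) ≠ 0 := by exact_mod_cast hY.card_ne_zero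
    simpa [this] using h
  · simp [unifWeight, hY]

/-- Rescaling the uniform average over `Y` by a weight `w` close to `|Y|` recovers the sum over `Y`
up to the factor `1 + ε / 2`; for empty `Y` the weight vanishes. -/
theorem weighted_unif_bounds {d : ℕ} (Y : Finset (Pt d)) (w ε : ℝ) (h1 : (Y.card : ℝ) ≤ w)
    (h2 : w ≤ (1 + ε / 2) * Y.card) (f : Pt d → ℝ) (hf : ∀ z, 0 ≤ f z) :
    ∑ x ∈ Y, f x ≤ w * ∑ z, unifWeight Y z * f z ∧
      w * ∑ z, unifWeight Y z * f z ≤ (1 + ε / 2) * ∑ x ∈ Y, f x := by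
  by_cases hY : Y.Nonempty
  · have hc : (0 : ℝ) < Y.card := by exact_mod_cast hY.card_pos
    have hs : 0 ≤ (∑ x ∈ Y, f x) / Y.card := div_nonneg (Finset.sum_nonneg fun x _ => hf x) hc.le
    have he : ∑ x ∈ Y, f x = Y.card * ((∑ x ∈ Y, f x) / Y.card) := by field_simp
    rw [sum_unifWeight_mul Y hY]
    constructor
    · calc _ = _ := he
        _ ≤ _ := mul_le_mul_of_nonneg_right h1 hs
    · calc _ ≤ _ := mul_le_mul_of_nonneg_right h2 hs
        _ = _ := by rw [mul_assoc, ← he]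
  · rw [Finset.not_nonempty_iff_eq_empty] at hY
    subst hY
    simp only [Finset.card_empty, Nat.cast_zero, mul_zero] at h1 h2
    simp [le_antisymm h2 h1]

theorem exists_nearest {d : ℕ} (B : Finset (Pt d)) (hB : B.Nonempty) (x : Pt d) :
    ∃ b ∈ B, hammingDist x b = minDist B x := by
  obtain ⟨b, hb, h⟩ := Nat.sInf_mem (s := (fun b => hammingDist x b) '' (B : Set (Pt d)))
    (Set.Nonempty.image _ (Finset.coe_nonempty.2 hB))
  exact ⟨b, Finset.mem_coe.1 hb, h⟩

theorem phiTuple_eq_sum_parts {d k : ℕ} (X : Finset (Pt d)) (c : Fin k → Pt d)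
    (Xp : Fin k → Finset (Pt d)) (hpart : IsPartition X Xp)
    (hclose : ∀ j, ∀ x ∈ Xp j, ∀ j', hammingDist x (c j) ≤ hammingDist x (c j')) :
    (phiTuple c X : ℝ) = ∑ j, ∑ x ∈ Xp j, (hammingDist x (c j) : ℝ) := by
  unfold phiTuple
  rw [sum_partition X Xp hpart]
  push_cast
  refine Finset.sum_congr rfl fun j _ => Finset.sum_congr rfl fun x hx => ?_
  congr 1
  refine le_antisymm (Nat.sInf_le (Set.mem_range_self j)) ?_
  obtain ⟨jmin, hjmin⟩ := Nat.sInf_mem (s := Set.range fun j => hammingDist x (c j)) ⟨_, j, rfl⟩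
  rw [← hjmin]
  exact hclose j x hx jmin

/-- The `D²`-sampling mass, extended by zero outside `X`. -/
noncomputable def dmassExt {d : ℕ} (B X : Finset (Pt d)) (x : Pt d) : ℝ :=
  if x ∈ X then dmass B X x else 0

theorem dmassExt_nonneg {d : ℕ} (B X : Finset (Pt d)) (x : Pt d) : 0 ≤ dmassExt B X x := by
  unfold dmassExt dmass; split_ifs <;> positivity

theorem sum_dmassExt {d : ℕ} (B X : Finset (Pt d)) (h : 0 < phiSet B X) :
    ∑ x, dmassExt B X x = 1 := by
  have h' : (phiSet B X : ℝ) ≠ 0 := by exact_mod_cast h.ne'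
  unfold dmassExt dmass
  rw [← Finset.sum_filter, Finset.filter_mem_eq_inter, Finset.univ_inter, ← Finset.sum_div,
    div_eq_one_iff_eq h', phiSet]
  push_cast
  rfl

theorem sum_dmassExt_eq {d k η : ℕ} (B X : Finset (Pt d)) (G : (Fin k → Fin η → Pt d) → Prop) :
    ∑ ω ∈ Finset.univ.filter G, ∏ j, ∏ u, dmassExt B X (ω j u)
      = ∑ ω ∈ (Fintype.piFinset fun _ : Fin k => Fintype.piFinset fun _ : Fin η => X).filter G,
          ∏ j, ∏ u, dmass B X (ω j u) := by
  symm
  calc _ = ∑ ω ∈ (Fintype.piFinset fun _ : Fin k => Fintype.piFinset fun _ : Fin η => X).filter G,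
          ∏ j, ∏ u, dmassExt B X (ω j u) := by
        refine Finset.sum_congr rfl fun ω hω => ?_
        have h := (Finset.mem_filter.1 hω).1
        simp only [Fintype.mem_piFinset] at h
        exact Finset.prod_congr rfl fun j _ => Finset.prod_congr rfl fun u _ => by
          simp [dmassExt, h j u]
    _ = _ := by
        refine Finset.sum_subset (Finset.filter_subset_filter _ (Finset.subset_univ _)) ?_
        intro ω hω hn
        have hG := (Finset.mem_filter.1 hω).2
        have : ∃ j u, ω j u ∉ X := by
          by_contra! hc
          exact hn (Finset.mem_filter.2 ⟨by simpa only [Fintype.mem_piFinset] using hc, hG⟩)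
        obtain ⟨j, u, hu⟩ := this
        exact Finset.prod_eq_zero (Finset.mem_univ j)
          (Finset.prod_eq_zero (Finset.mem_univ u) (by simp [dmassExt, hu]))

/-! ### The sampling theorem -/

/-- key lemma for `GoodCenters`.  `ω j` is the `j`-th batch `M_j'` of `η`
`D²`-sampled points; `M_j = B_j' + M_j'|_{X_j}` where `B_j'` consists of `τ` copies of each
element of `B`.  With probability `≥ c·ε` over `ω` there exist `τ`-element sub-multisets
`S_j ⊆ M_j` for which `best_𝓡` yields a `(1+ε)`-approximate center tuple. -/
theorem stmt2 :
    ∃ c c₁ c₂ : ℝ, 0 < c ∧ 0 < c₁ ∧ 0 < c₂ ∧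
      ∀ (d k : ℕ), 0 < k →
      ∀ (X : Finset (Pt d))
        (R : Fin d → Finset (Fin k → Bool)), (∀ i, (R i).Nonempty) →
      ∀ (ε α : ℝ), 0 < ε → ε ≤ 1 / 2 → 1 ≤ α →
      ∀ (B : Finset (Pt d)), B.Nonempty → B.card ≤ k → 0 < phiSet B X →
      (∀ ct : Fin k → Pt d, (phiSet B X : ℝ) ≤ α * (phiTuple ct X : ℝ)) →
      -- `copt` is an optimal center tuple satisfying 𝓡, `Xp` the induced partition
      ∀ (copt : Fin k → Pt d), Sat R copt →
      (∀ ct, Sat R ct → phiTuple copt X ≤ phiTuple ct X) →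
      ∀ (Xp : Fin k → Finset (Pt d)), IsPartition X Xp →
      (∀ j, ∀ x ∈ Xp j, ∀ j', hammingDist x (copt j) ≤ hammingDist x (copt j')) →
      ∀ (τ η : ℕ),
        (τ : ℝ) ≥ c₁ * ((k : ℝ) / ε ^ 2) * Real.log ((k : ℝ) / ε) →
        (η : ℝ) ≥ c₂ * (τ : ℝ) * α * (k : ℝ) / ε ^ 2 →
      ∀ (w : Fin k → ℕ),
        (∀ j, ((Xp j).card : ℝ) ≤ (w j : ℝ) ∧ (w j : ℝ) ≤ (1 + ε / 2) * ((Xp j).card : ℝ)) →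
      ∀ (bestSel : (Fin k → Multiset (Pt d)) → (Fin k → ℕ) → (Fin k → Pt d)),
        BestSpec R bestSel →
      c * ε ≤
        ∑ ω ∈ (Fintype.piFinset fun _ : Fin k =>
              Fintype.piFinset fun _ : Fin η => X).filter
            (fun ω => ∃ S : Fin k → Multiset (Pt d),
              (∀ j, S j ≤ (B.val.bind fun b => Multiset.replicate τ b)
                  + (Multiset.map (ω j) Finset.univ.val).filter (· ∈ Xp j)) ∧
              (∀ j, Multiset.card (S j) = τ) ∧
              (phiTuple (bestSel S w) X : ℝ) ≤ (1 + ε) * (phiTuple copt X : ℝ)),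
          ∏ j, ∏ u, dmass B X (ω j u) := by
  refine ⟨1 / 2, 100000, 1000, by norm_num, by norm_num, by norm_num, ?_⟩
  intro d k hk X R _ ε α hε hε2 hα B hB _ hΦ hBα copt hsat _ Xp hpart hclose τ η hτ hη w hw
    bestSel hbest
  have hk' : (1 : ℝ) ≤ k := by exact_mod_cast hk
  have hk0 : (0 : ℝ) < k := by linarith
  have hα0 : 0 < α := by linarith
  have hΦ' : (0 : ℝ) < phiSet B X := by exact_mod_cast hΦ
  set O : ℝ := (phiTuple copt X : ℝ) with hOdef
  have hΦO : (phiSet B X : ℝ) ≤ α * O := hBα copt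
  have hO : 0 < O := by
    by_contra! h
    nlinarith
  -- `log (k / ε) ≥ log 2`
  have hτ1 : 60000 * (k : ℝ) / ε ^ 2 ≤ τ := by
    have h2 : (2 : ℝ) ≤ k / ε := by rw [le_div_iff₀ hε]; linarith
    have hlog : 0.6 ≤ Real.log (k / ε) :=
      le_trans (by linarith [Real.log_two_gt_d9]) (Real.log_le_log (by norm_num) h2)
    have hpos : 0 < 100000 * ((k : ℝ) / ε ^ 2) := by positivity
    calc 60000 * (k : ℝ) / ε ^ 2 = 100000 * ((k : ℝ) / ε ^ 2) * 0.6 := by ring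
      _ ≤ 100000 * ((k : ℝ) / ε ^ 2) * Real.log (k / ε) := mul_le_mul_of_nonneg_left hlog hpos.le
      _ ≤ τ := hτ
  have hτ2 : 60000 / ε ^ 2 ≤ (τ : ℝ) := le_trans (by gcongr; linarith) hτ1
  have hτ3 : 2 * (k : ℝ) ≤ τ := by
    refine le_trans ?_ hτ1
    rw [le_div_iff₀ (by positivity)]
    have hsq : ε ^ 2 ≤ 1 := by nlinarith
    nlinarith [mul_le_mul_of_nonneg_left hsq hk0.le]
  have hτpos : (0 : ℝ) < τ := by linarith
  have hτ0 : 0 < τ := by exact_mod_cast hτpos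
  -- each draw simulates a uniform draw from a cluster with probability `p`
  set p : ℝ := ε / (100 * α * k) with hpdef
  have hp0 : 0 < p := by positivity
  have hp : p ≤ 1 / 2 := by
    rw [hpdef, div_le_iff₀ (by positivity)]
    nlinarith [mul_le_mul hα hk' zero_le_one hα0.le]
  have hpη : 4 * (τ : ℝ) ≤ p * η := by
    calc 4 * (τ : ℝ) ≤ 10 * τ / ε := by rw [le_div_iff₀ hε]; nlinarith
      _ = p * (1000 * (τ : ℝ) * α * k / ε ^ 2) := by rw [hpdef]; field_simp; norm_num
      _ ≤ p * η := mul_le_mul_of_nonneg_left hη hp0.le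
  -- far points of a cluster are kept; every other point is replaced by a nearest center of `B`
  choose near hnearB hnearD using exists_nearest B hB
  set F : Fin k → Pt d → Prop := fun j z =>
    z ∈ Xp j ∧ p * phiSet B X < minDist B z * (Xp j).card with hF
  set π : Fin k → Pt d → Pt d := fun j z => if F j z then z else near z with hπ
  set ν : Fin k → Pt d → ℝ := fun j => unifWeight (Xp j) with hν
  have hν0 : ∀ j z, 0 ≤ ν j z := fun j z => unifWeight_nonneg _ _
  have hν1 : ∀ j, ∑ z, ν j z = 1 := fun j => sum_unifWeight _
  have hfar : ∀ j z, F j z → p * ν j z ≤ dmassExt B X z := by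
    intro j z hz
    have hne : (Xp j).Nonempty := ⟨z, hz.1⟩
    have hc : (0 : ℝ) < (Xp j).card := by exact_mod_cast hne.card_pos
    simp only [hν, unifWeight, if_pos hne, if_pos hz.1, dmassExt, if_pos (hpart.1 j hz.1), dmass]
    rw [mul_one_div, div_le_div_iff₀ hc hΦ']
    exact hz.2.le
  -- the total replacement cost is at most `p k Φ(B, X) ≤ (ε / 100) OPT`
  set mov : ℝ := ∑ j, ∑ x ∈ Xp j, (hammingDist x (π j x) : ℝ) with hmovdef
  have hmov : mov ≤ ε / 100 * O := by
    have h1 : ∀ j, ∑ x ∈ Xp j, (hammingDist x (π j x) : ℝ) ≤ p * phiSet B X := by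
      intro j
      by_cases hne : (Xp j).Nonempty
      · have hc : (0 : ℝ) < (Xp j).card := by exact_mod_cast hne.card_pos
        calc ∑ x ∈ Xp j, (hammingDist x (π j x) : ℝ)
            ≤ ∑ x ∈ Xp j, p * phiSet B X / (Xp j).card := by
              refine Finset.sum_le_sum fun x hx => ?_
              by_cases hFx : F j x
              · simp only [hπ, if_pos hFx, hammingDist_self, Nat.cast_zero]
                positivity
              · simp only [hπ, if_neg hFx, hnearD]
                rw [le_div_iff₀ hc]
                exact not_lt.1 fun h => hFx ⟨hx, h⟩
          _ = p * phiSet B X := by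
              rw [Finset.sum_const, nsmul_eq_mul]; field_simp
      · rw [Finset.not_nonempty_iff_eq_empty.1 hne, Finset.sum_empty]
        positivity
    calc mov ≤ ∑ _j : Fin k, p * phiSet B X := Finset.sum_le_sum fun j _ => h1 j
      _ = ε / (100 * α) * phiSet B X := by
          rw [Finset.sum_const, nsmul_eq_mul, Finset.card_univ, Fintype.card_fin, hpdef]
          field_simp
      _ ≤ ε / (100 * α) * (α * O) := mul_le_mul_of_nonneg_left hΦO (by positivity)
      _ = _ := by field_simp
  set g : ℝ := ∑ i, ∑ j, w j * errRate (ν j) (π j) (copt j) i with hgdef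
  have hg : g ≤ (1 + ε / 2) * (mov + O) := by
    rw [hgdef, Finset.sum_comm, hOdef, phiTuple_eq_sum_parts X copt Xp hpart hclose, hmovdef,
      ← Finset.sum_add_distrib, Finset.mul_sum]
    refine Finset.sum_le_sum fun j _ => ?_
    rw [← Finset.mul_sum, sum_errRate, ← Finset.sum_add_distrib]
    refine (weighted_unif_bounds (Xp j) (w j) ε (hw j).1 (hw j).2
      (fun z => hammingDist (π j z) (copt j)) fun z => by positivity).2.trans ?_
    refine mul_le_mul_of_nonneg_left (Finset.sum_le_sum fun x _ => ?_) (by positivity)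
    have := hammingDist_triangle (π j x) x (copt j)
    rw [hammingDist_comm (π j x) x] at this
    exact_mod_cast this
  have hg2 : g ≤ 3 / 2 * O := by
    have h1 : mov ≤ 1 / 200 * O := hmov.trans (by nlinarith)
    have h2 : (1 + ε / 2) * (mov + O) ≤ (1 + ε / 2) * (201 / 200 * O) :=
      mul_le_mul_of_nonneg_left (by linarith) (by linarith)
    nlinarith
  -- one coupling per batch, with success probability `γ j ≥ 1 - 1 / (2 k)`
  choose J γ hJ0 hJm hJN hJF hγ using fun j => exists_batch_coupling (dmassExt B X) (ν j) (F j) p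
    (dmassExt_nonneg B X) (sum_dmassExt B X hΦ) (hν0 j) (hν1 j) hp0.le hp (hfar j) η τ
  set Z : (Fin k → Fin τ → Pt d) → ℝ := fun s => ∑ i, ∑ j, w j *
    (empRate (s j) (π j) (copt j) i - errRate (ν j) (π j) (copt j) i) ^ 2 with hZ
  -- `E[Z] ≤ g / τ`; `O > 0` rather than `g` (which may vanish) sets the Markov threshold
  have hmarkov := markov_sum (fun s : Fin k → Fin τ → Pt d => ∏ j, ∏ v, ν j (s j v)) Z
    (fun s => Finset.prod_nonneg fun j _ => Finset.prod_nonneg fun v _ => hν0 _ _)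
    (by
      rw [← Fintype.prod_sum (fun (j : Fin k) (a : Fin τ → Pt d) => ∏ v, ν j (a v))]
      exact Finset.prod_eq_one fun j _ => sum_prod_eq_one (ν j) (hν1 j) τ)
    (fun s => Finset.sum_nonneg fun i _ => Finset.sum_nonneg fun j _ => by positivity)
    (3 * O / τ) (by positivity)
    ((expected_deviation_le hτ0 w ν π hν1 copt).trans (by
      rw [div_right_comm]
      exact div_le_div_of_nonneg_right (by linarith) hτpos.le))
  have hprod : 1 / 2 ≤ ∏ j, γ j := prod_success_ge hk γ fun j => success_ge hk hp hpη hτ3 (hγ j)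
  rw [← sum_dmassExt_eq]
  refine le_trans ?_ (sum_prod_ge_of_coupling (fun a : Fin η → Pt d => ∏ u, dmassExt B X (a u))
    (fun j (a : Fin τ → Pt d) => ∏ v, ν j (a v)) γ J hJ0 hJm hJN _ (fun s => Z s ≤ 3 * O / τ) ?_)
  · have := mul_le_mul hprod hmarkov (by norm_num) (by linarith)
    linarith
  · intro ω s hJ hs
    refine ⟨fun j => Multiset.map (fun v => π j (s j v)) Finset.univ.val, fun j => ?_,
      fun j => by simp, ?_⟩
    · exact sample_le_batch B (Xp j) (F j) (π j)
        (fun z hz => ⟨by simp only [hπ, if_pos hz], hz.1⟩)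
        (fun z hz => by simp only [hπ, if_neg hz]; exact hnearB z) (s j) _
        (hJF j (ω j) (s j) (hJ j))
    · exact (phiTuple_best_le hτ0 X R copt hsat Xp hpart w ν π hν0 hν1
        (fun j f hf => (weighted_unif_bounds (Xp j) (w j) ε (hw j).1 (hw j).2 f hf).1)
        bestSel hbest (ε / 200) (by positivity) (by linarith) s).trans
        (final_arith hε hε2 hO hmov hg hτ2 hs)
end

section
/- Let A ∈ {0,1}^{n×d}, let r ≥ 1, and let f : {0,1}^r × {0,1}^r → {0,1} be an arbitrary inner product function. Set k = 2^r, fix an enumeration λ_1, ..., λ_k of {0,1}^r, let X be the multiset of rows of A, and for every i ∈ {1,...,d} let R_i = {(f(λ_1, x), ..., f(λ_k, x)) : x ∈ {0,1}^r}. Then for every U ∈ {0,1}^{n×r} and V ∈ {0,1}^{r×d}, the center tuple (c_1, ..., c_k) defined by c_t[j] = f(λ_t, V^j) satisfies 𝓡 = (R_1, ..., R_d) and Φ({c_1,...,c_k}, X) ≤ ‖A − U·V‖₀. Consequently, the minimum of Φ(C, X) over center tuples C satisfying 𝓡 equals the minimum of ‖A − U·V‖₀ over all U ∈ {0,1}^{n×r}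 and V ∈ {0,1}^{r×d}. -/
/-!
Both optima range over the same data. A tuple of centers satisfying the constraints is exactly one
of the form `c_t[j] = f(λ_t, V^j)` for some `V`. Since `λ` is onto, choosing the row `U_i` amounts
to choosing the center `c_t` to which the row `A_i` is assigned, and `l0_eq_sum` splits
`‖A - U·V‖₀` into the resulting Hamming distances. An arbitrary assignment costs at least as much as
assigning every row to a nearest center, and the nearest-center assignment attains `Φ`.
-/

open Finset
open scoped Classical

/-- `‖A - M‖₀`: the number of entries on which the two binary matrices differ. -/
def l0 {n d : ℕ} (A M : Fin n → Fin d → Bool) : ℕ :=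
  (Finset.univ.filter fun p : Fin n × Fin d => A p.1 p.2 ≠ M p.1 p.2).card

/-- The product `U·V` with respect to the inner product function `f`:
`(U·V)_{ij} = f(U_i, V^j)`. -/
def bmul {n r d : ℕ} (f : (Fin r → Bool) → (Fin r → Bool) → Bool)
    (U : Fin n → Fin r → Bool) (V : Fin r → Fin d → Bool) : Fin n → Fin d → Bool :=
  fun i j => f (U i) fun t => V t j

theorem l0_eq_sum {n d : ℕ} (A M : Fin n → Fin d → Bool) :
    l0 A M = ∑ i, hammingDist (A i) (M i) := by
  unfold l0 hammingDist
  simp only [Finset.card_filter]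
  rw [Fintype.sum_prod_type]

theorem phiTupleM_rows {n d k : ℕ} (c : Fin k → Pt d) (A : Fin n → Fin d → Bool) :
    phiTupleM c (Multiset.map A Finset.univ.val) =
      ∑ i, sInf (Set.range fun j => hammingDist (A i) (c j)) := by
  simp only [phiTupleM, Multiset.map_map]
  rfl

/-- other direction of the reduction, and the resulting equality of optima.
`lam` enumerates `{0,1}^r`; a tuple `c` satisfies `𝓡 = (R_1,...,R_d)` with
`R_i = {(f(λ_1,x),...,f(λ_k,x)) : x ∈ {0,1}^r}` iff for each `i` there is `x` with
`c_t[i] = f(λ_t, x)` for all `t`.  For all `U, V`, the tuple `c_t[j] = f(λ_t, V^j)`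
satisfies 𝓡 and `Φ({c_1,...,c_k}, X) ≤ ‖A - U·V‖₀`; consequently the minimum of `Φ(C,X)`
over tuples satisfying 𝓡 equals the minimum of `‖A - U·V‖₀` over all `U, V`. -/
theorem stmt12 (n d r : ℕ) (hr : 1 ≤ r) (A : Fin n → Fin d → Bool)
    (f : (Fin r → Bool) → (Fin r → Bool) → Bool)
    (k : ℕ) (hk : k = 2 ^ r)
    (lam : Fin k → (Fin r → Bool)) (hlam : Function.Bijective lam) :
    (∀ (U : Fin n → Fin r → Bool) (V : Fin r → Fin d → Bool) (c : Fin k → Pt d),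
      (c = fun t j => f (lam t) fun s => V s j) →
      (∀ i : Fin d, ∃ x : Fin r → Bool, ∀ t, c t i = f (lam t) x) ∧
      phiTupleM c (Multiset.map A Finset.univ.val) ≤ l0 A (bmul f U V)) ∧
    sInf {N : ℕ | ∃ c : Fin k → Pt d,
        (∀ i : Fin d, ∃ x : Fin r → Bool, ∀ t, c t i = f (lam t) x) ∧
        N = phiTupleM c (Multiset.map A Finset.univ.val)} =
      sInf {N : ℕ | ∃ (U : Fin n → Fin r → Bool) (V : Fin r → Fin d → Bool),
        N = l0 A (bmul f U V)} := by
  have first : ∀ (U : Fin n → Fin r → Bool) (V : Fin r → Fin d → Bool) (c : Fin k → Pt d),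
      (c = fun t j => f (lam t) fun s => V s j) →
      (∀ i : Fin d, ∃ x : Fin r → Bool, ∀ t, c t i = f (lam t) x) ∧
      phiTupleM c (Multiset.map A Finset.univ.val) ≤ l0 A (bmul f U V) := by
    rintro U V c rfl
    refine ⟨fun i => ⟨fun s => V s i, fun t => rfl⟩, ?_⟩
    rw [l0_eq_sum, phiTupleM_rows]
    refine Finset.sum_le_sum fun i _ => ?_
    obtain ⟨t, ht⟩ := hlam.2 (U i)
    refine Nat.sInf_le ⟨t, ?_⟩
    simp only [ht]
    rfl
  refine ⟨first, le_antisymm ?_ ?_⟩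
  · obtain ⟨U, V, h⟩ := Nat.sInf_mem (s := {N : ℕ | ∃ (U : Fin n → Fin r → Bool)
      (V : Fin r → Fin d → Bool), N = l0 A (bmul f U V)}) ⟨_, fun _ _ => true, fun _ _ => true, rfl⟩
    rw [h]
    obtain ⟨h1, h2⟩ := first U V _ rfl
    refine le_trans (Nat.sInf_le ?_) h2
    exact ⟨_, h1, rfl⟩
  · obtain ⟨c, hc, h⟩ := Nat.sInf_mem (s := {N : ℕ | ∃ c : Fin k → Pt d,
        (∀ i : Fin d, ∃ x : Fin r → Bool, ∀ t, c t i = f (lam t) x) ∧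
        N = phiTupleM c (Multiset.map A Finset.univ.val)})
      ⟨_, _, (first (fun _ _ => true) (fun _ _ => true) _ rfl).1, rfl⟩
    rw [h]
    choose x hx using hc
    obtain ⟨t₀, -⟩ := hlam.2 fun _ => true
    -- `m i` is the index of a center nearest to the row `A i`.
    have near : ∀ i, ∃ t, hammingDist (A i) (c t) =
        sInf (Set.range fun j => hammingDist (A i) (c j)) := fun i =>
      Nat.sInf_mem (s := Set.range fun j => hammingDist (A i) (c j)) ⟨_, t₀, rfl⟩
    choose m hm using near
    refine Nat.sInf_le ⟨fun i => lam (m i), fun s j => x j s, ?_⟩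
    rw [l0_eq_sum, phiTupleM_rows]
    refine Finset.sum_congr rfl fun i _ => ?_
    rw [← hm i]
    congr 1
    funext j
    exact hx j (m i)
end
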